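/- Integrated Brakke-type identity at the ε-level: for every φ ∈ C¹(ℝ^d × [0,T]) whose spatial supports supp φ(·,t) are contained in one fixed compact subset of ℝ^d, and every 0 ≤ t₁ < t₂ ≤ T, one has σ ( ∫ φ(x,t₂) dμ_{t₂}^ε(x) − ∫ φ(x,t₁) dμ_{t₁}^ε(x) ) = ∫_{t₁}^{t₂} ∫_{ℝ^d} ( −ε φ ( (h^ε)²/2 + (∂ₜφ̃)²/2 ) + φ λ(t)² W(φ̃)/ε − ε (∇φ · ∇φ̃)( h^ε + λ(t) √(2W(φ̃))/ε ) ) dx dt + σ ∫_{t₁}^{t₂} ∫_{ℝ^d} ∂ₜφ dμ_t^ε dt, where φ̃ denotes the solution of the equation and φ the test function. -/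

import Mathlib

open MeasureTheory Real Function
open scoped RealInnerProductSpace

noncomputable section

abbrev Euc (d : ℕ) := EuclideanSpace ℝ (Fin d)

/-- The double-well potential `W(s) = (1-s²)²/2`. -/
def W (s : ℝ) : ℝ := (1 - s ^ 2) ^ 2 / 2

/-- Its derivative `W'(s) = -2s(1-s²)`. -/
def Wp (s : ℝ) : ℝ := -2 * s * (1 - s ^ 2)

/-- `k(s) = ∫₀ˢ √(2W(r)) dr`. -/
def kfun (s : ℝ) : ℝ := ∫ r in (0:ℝ)..s, Real.sqrt (2 * W r)

/-- The unit cell `Q = [0,1)^d`. -/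
def Qcell (d : ℕ) : Set (Euc d) := {x | ∀ i, x i ∈ Set.Ico (0:ℝ) 1}

/-- The Laplacian (sum of second partial derivatives). -/
def lap {d : ℕ} (f : Euc d → ℝ) (x : Euc d) : ℝ :=
  ∑ i : Fin d, fderiv ℝ (fun y => fderiv ℝ f y (EuclideanSpace.single i 1)) x
    (EuclideanSpace.single i 1)

/-- `σ = ∫₋₁¹ √(2W(s)) ds`. -/
def sigma0 : ℝ := ∫ s in (-1:ℝ)..1, Real.sqrt (2 * W s)

/-- Density of the diffuse surface measure `μ_t^ε` with respect to Lebesgue measure. -/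
def muDens (d : ℕ) (ε : ℝ) (φt : Euc d → ℝ → ℝ) (x : Euc d) (t : ℝ) : ℝ :=
  (1 / sigma0) * (ε * ‖gradient (fun y => φt y t) x‖ ^ 2 / 2 + W (φt x t) / ε)

/-- The approximate mean curvature `h^ε = Δφ̃ - W'(φ̃)/ε²`. -/
def heps (d : ℕ) (ε : ℝ) (φt : Euc d → ℝ → ℝ) (x : Euc d) (t : ℝ) : ℝ :=
  lap (fun y => φt y t) x - Wp (φt x t) / ε ^ 2

theorem aux_fderiv_x {d : ℕ} {V : Euc d × ℝ → ℝ} (hV : Differentiable ℝ V) (x : Euc d) (t : ℝ) :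
    HasFDerivAt (fun y => V (y, t)) ((fderiv ℝ V (x, t)).comp (ContinuousLinearMap.inl ℝ (Euc d) ℝ)) x :=
  (hV (x, t)).hasFDerivAt.comp x (hasFDerivAt_prodMk_left x t)

theorem aux_fderiv_x_apply {d : ℕ} {V : Euc d × ℝ → ℝ} (hV : Differentiable ℝ V) (x : Euc d) (t : ℝ)
    (v : Euc d) : fderiv ℝ (fun y => V (y, t)) x v = fderiv ℝ V (x, t) (v, 0) := by
  rw [(aux_fderiv_x hV x t).fderiv]; simp

theorem aux_deriv_t {d : ℕ} {V : Euc d × ℝ → ℝ} (hV : Differentiable ℝ V) (x : Euc d) (t : ℝ) :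
    HasDerivAt (fun s => V (x, s)) (fderiv ℝ V (x, t) (0, 1)) t := by
  have h := ((hV (x, t)).hasFDerivAt.comp t (hasFDerivAt_prodMk_right x t)).hasDerivAt
  refine HasDerivAt.congr_deriv (f := fun s => V (x, s)) h ?_
  simp

theorem aux_inner {d : ℕ} (f g : Euc d → ℝ) (x : Euc d) :
    ⟪gradient f x, gradient g x⟫ = ∑ i : Fin d, fderiv ℝ f x (EuclideanSpace.single i 1) *
      fderiv ℝ g x (EuclideanSpace.single i 1) := by
  have key : ∀ (f : Euc d → ℝ) (i : Fin d), gradient f x i = fderiv ℝ f x (EuclideanSpace.single i 1) := by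
    intro f i
    rw [← inner_gradient_left, EuclideanSpace.inner_single_right]
    simp
  rw [PiLp.inner_apply]
  refine Finset.sum_congr rfl fun i _ => ?_
  rw [← key, ← key]
  simp [mul_comm]

theorem aux_fderiv_zero {d : ℕ} {V : Euc d × ℝ → ℝ} {K : Set (Euc d)} (hK : IsCompact K)
    (h : ∀ x t, x ∉ K → V (x, t) = 0) (x : Euc d) (t : ℝ) (hx : x ∉ K) : fderiv ℝ V (x, t) = 0 := by
  have : V =ᶠ[nhds (x, t)] fun _ => 0 := by
    have ho : IsOpen (Kᶜ ×ˢ (Set.univ : Set ℝ)) := hK.isClosed.isOpen_compl.prod isOpen_univ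
    filter_upwards [ho.mem_nhds (show (x, t) ∈ _ from ⟨hx, trivial⟩)] with z hz
    exact h z.1 z.2 hz.1
  rw [this.fderiv_eq]; simp

theorem aux_int_x {d : ℕ} {g : Euc d × ℝ → ℝ} (hg : Continuous g) {K : Set (Euc d)} (hK : IsCompact K)
    (h : ∀ x t, x ∉ K → g (x, t) = 0) (t : ℝ) : Integrable (fun x => g (x, t)) :=
  Continuous.integrable_of_hasCompactSupport (by fun_prop)
    (HasCompactSupport.intro hK fun x hx => h x t hx)

theorem aux_int_prod {d : ℕ} {g : Euc d × ℝ → ℝ} (hg : Continuous g) {K : Set (Euc d)} (hK : IsCompact K)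
    (h : ∀ x t, x ∉ K → g (x, t) = 0) (a b : ℝ) :
    Integrable g ((volume : Measure (Euc d)).prod (volume.restrict (Set.uIoc a b))) := by
  have h1 : IntegrableOn g (K ×ˢ Set.uIcc a b) (volume.prod volume) :=
    hg.continuousOn.integrableOn_compact (hK.prod isCompact_uIcc)
  have h2 : IntegrableOn g (K ×ˢ Set.uIoc a b) (volume.prod volume) :=
    h1.mono_set (Set.prod_mono le_rfl Set.uIoc_subset_uIcc)
  have h3 : IntegrableOn g (Set.univ ×ˢ Set.uIoc a b) (volume.prod volume) := by
    refine h2.of_forall_sdiff_eq_zero (MeasurableSet.univ.prod measurableSet_uIoc) ?_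
    rintro ⟨x, t⟩ ⟨hz1, hz2⟩
    apply h
    intro hx
    exact hz2 ⟨hx, hz1.2⟩
  rw [IntegrableOn, ← Measure.prod_restrict, Measure.restrict_univ] at h3
  exact h3

theorem aux_intervalIntegrable {d : ℕ} {g : Euc d × ℝ → ℝ} (hg : Continuous g) {K : Set (Euc d)}
    (hK : IsCompact K) (h : ∀ x t, x ∉ K → g (x, t) = 0) (a b : ℝ) :
    IntervalIntegrable (fun t => ∫ x, g (x, t)) volume a b := by
  rw [intervalIntegrable_iff]
  exact (aux_int_prod hg hK h a b).integral_prod_right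

theorem aux_ftc {d : ℕ} {V : Euc d × ℝ → ℝ} (hV : ContDiff ℝ 1 V) {K : Set (Euc d)}
    (hK : IsCompact K) (h : ∀ x t, x ∉ K → V (x, t) = 0) (a b : ℝ) :
    (∫ x, V (x, b)) - ∫ x, V (x, a) = ∫ t in a..b, ∫ x, fderiv ℝ V (x, t) (0, 1) := by
  have hc : Continuous (fun z => fderiv ℝ V z (0, 1)) :=
    (hV.continuous_fderiv (by simp)).clm_apply continuous_const
  have hz : ∀ x t, x ∉ K → fderiv ℝ V (x, t) (0, 1) = 0 := fun x t hx => by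
    rw [aux_fderiv_zero hK h x t hx]; rfl
  have hd := hV.differentiable (by simp)
  rw [intervalIntegral_integral_swap (f := fun t x => fderiv ℝ V (x, t) (0, 1))
    (aux_int_prod hc hK hz a b).swap, ← integral_sub (aux_int_x hV.continuous hK h b)
    (aux_int_x hV.continuous hK h a)]
  refine integral_congr_ae (Filter.Eventually.of_forall fun x => ?_)
  refine (intervalIntegral.integral_eq_sub_of_hasDerivAt (fun t _ => aux_deriv_t hd x t) ?_).symm
  exact Continuous.intervalIntegrable (hc.comp (by fun_prop)) _ _

theorem aux_sigma_pos : 0 < sigma0 := by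
  unfold sigma0
  apply intervalIntegral.intervalIntegral_pos_of_pos_on
  · apply Continuous.intervalIntegrable
    unfold W
    fun_prop
  · intro x hx
    apply Real.sqrt_pos.2
    unfold W
    have : 0 < 1 - x ^ 2 := by nlinarith [hx.1, hx.2]
    positivity
  · norm_num

theorem aux_parts {d : ℕ} {A B : Euc d × ℝ → ℝ} (hA : ContDiff ℝ 1 A) (hB : ContDiff ℝ 1 B)
    {K : Set (Euc d)} (hK : IsCompact K) (h : ∀ x t, x ∉ K → A (x, t) = 0) (t : ℝ) (v : Euc d) :
    ∫ x, A (x, t) * fderiv ℝ B (x, t) (v, 0) = - ∫ x, fderiv ℝ A (x, t) (v, 0) * B (x, t) := by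
  have hdA := hA.differentiable (by simp)
  have hdB := hB.differentiable (by simp)
  have hcA : Continuous (fun z => fderiv ℝ A z (v, 0)) :=
    (hA.continuous_fderiv (by simp)).clm_apply continuous_const
  have hcB : Continuous (fun z => fderiv ℝ B z (v, 0)) :=
    (hB.continuous_fderiv (by simp)).clm_apply continuous_const
  have hA0 := hA.continuous
  have hB0 := hB.continuous
  have := integral_mul_fderiv_eq_neg_fderiv_mul_of_integrable (μ := (volume : Measure (Euc d)))
    (f := fun x => A (x, t)) (g := fun x => B (x, t)) (v := v)
    (by
      simp_rw [aux_fderiv_x_apply hdA]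
      exact aux_int_x (g := fun z => fderiv ℝ A z (v, 0) * B z) (hcA.mul hB0) hK
        (fun x t hx => by simp [aux_fderiv_zero hK h x t hx]) t)
    (by
      simp_rw [aux_fderiv_x_apply hdB]
      exact aux_int_x (g := fun z => A z * fderiv ℝ B z (v, 0)) (hA0.mul hcB) hK
        (fun x t hx => by simp [h x t hx]) t)
    (aux_int_x (g := fun z => A z * B z) (hA0.mul hB0) hK
        (fun x t hx => by simp [h x t hx]) t)
    (fun x _ => (aux_fderiv_x hdA x t).differentiableAt)
    (fun x _ => (aux_fderiv_x hdB x t).differentiableAt)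
  simp_rw [aux_fderiv_x_apply hdA, aux_fderiv_x_apply hdB] at this
  exact this

theorem aux_W (s : ℝ) : HasDerivAt W (Wp s) s := by
  have := (((hasDerivAt_pow 2 s).const_sub 1).pow 2).div_const 2
  refine this.congr_deriv ?_
  unfold Wp; simp; ring

theorem aux_contDiff_D {d : ℕ} {U : Euc d × ℝ → ℝ} {n : ℕ∞} (hU : ContDiff ℝ (⊤ : ℕ∞) U)
    (v : Euc d × ℝ) : ContDiff ℝ n (fun z => fderiv ℝ U z v) :=
  (hU.fderiv_right (m := n) (by norm_cast; exact le_top)).clm_apply contDiff_const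

theorem aux_symm {d : ℕ} {U : Euc d × ℝ → ℝ} (hU : ContDiff ℝ (⊤ : ℕ∞) U) (z v w : Euc d × ℝ) :
    fderiv ℝ (fun y => fderiv ℝ U y v) z w = fderiv ℝ (fun y => fderiv ℝ U y w) z v := by
  have hd : DifferentiableAt ℝ (fderiv ℝ U) z :=
    ((hU.fderiv_right (m := 1) (by norm_cast)).differentiable (by simp)) z
  have hs := (hU.contDiffAt (x := z)).isSymmSndFDerivAt (by simp; norm_cast)
  rw [fderiv_clm_apply hd (differentiableAt_const v), fderiv_clm_apply hd (differentiableAt_const w)]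
  simpa using hs w v

/-- energy density -/
def auxEn (d : ℕ) (ε : ℝ) (U : Euc d × ℝ → ℝ) (z : Euc d × ℝ) : ℝ :=
  ε * (∑ i : Fin d, (fderiv ℝ U z (EuclideanSpace.single i 1, 0)) ^ 2) / 2 + W (U z) / ε

theorem auxEn_contDiff (d : ℕ) (ε : ℝ) {U : Euc d × ℝ → ℝ} (hU : ContDiff ℝ (⊤ : ℕ∞) U) :
    ContDiff ℝ 1 (auxEn d ε U) := by
  unfold auxEn W
  have h1 : ContDiff ℝ 1 U := hU.of_le (by norm_cast)
  have h2 : ∀ v, ContDiff ℝ 1 (fun z => fderiv ℝ U z v) := fun v => aux_contDiff_D (n := 1) hU v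
  have h3 : ContDiff ℝ 1 (fun z => ∑ i : Fin d, (fderiv ℝ U z (EuclideanSpace.single i 1, 0)) ^ 2) :=
    ContDiff.sum fun i _ => (h2 _).pow 2
  exact ((contDiff_const.mul h3).div_const _).add
    ((((contDiff_const.sub (h1.pow 2)).pow 2).div_const _).div_const _)

theorem auxEn_dt (d : ℕ) (ε : ℝ) {U : Euc d × ℝ → ℝ} (hU : ContDiff ℝ (⊤ : ℕ∞) U) (x : Euc d) (t : ℝ) :
    fderiv ℝ (auxEn d ε U) (x, t) (0, 1) =
      ε * (∑ i : Fin d, fderiv ℝ U (x, t) (EuclideanSpace.single i 1, 0) *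
        fderiv ℝ (fun z => fderiv ℝ U z (0, 1)) (x, t) (EuclideanSpace.single i 1, 0))
      + Wp (U (x, t)) * fderiv ℝ U (x, t) (0, 1) / ε := by
  have hd := (auxEn_contDiff d ε hU).differentiable (by simp)
  have h2 : ∀ v, Differentiable ℝ (fun z => fderiv ℝ U z v) := fun v =>
    (aux_contDiff_D (n := 1) hU v).differentiable (by simp)
  have hUd : Differentiable ℝ U := hU.differentiable (by simp)
  refine (aux_deriv_t hd x t).unique ?_
  have hs : HasDerivAt (fun s => ∑ i : Fin d, (fderiv ℝ U (x, s) (EuclideanSpace.single i 1, 0)) ^ 2)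
      (∑ i : Fin d, 2 * fderiv ℝ U (x, t) (EuclideanSpace.single i 1, 0) *
        fderiv ℝ (fun z => fderiv ℝ U z (0, 1)) (x, t) (EuclideanSpace.single i 1, 0)) t := by
    refine HasDerivAt.fun_sum fun i _ => ?_
    have := (aux_deriv_t (h2 (EuclideanSpace.single i 1, 0)) x t).pow 2
    rw [aux_symm hU] at this
    refine HasDerivAt.congr_deriv (f := fun s => (fderiv ℝ U (x, s) (EuclideanSpace.single i 1, 0)) ^ 2)
      this ?_
    simp
  have hw := (aux_W (U (x, t))).comp t (aux_deriv_t hUd x t)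
  refine (((hs.const_mul ε).div_const 2).add (hw.div_const ε)).congr_deriv ?_
  simp_rw [mul_assoc, ← Finset.mul_sum]
  ring

/-- approximate curvature -/
def auxH (d : ℕ) (ε : ℝ) (U : Euc d × ℝ → ℝ) (z : Euc d × ℝ) : ℝ :=
  (∑ i : Fin d, fderiv ℝ (fun y => fderiv ℝ U y (EuclideanSpace.single i 1, 0)) z
    (EuclideanSpace.single i 1, 0)) - Wp (U z) / ε ^ 2

theorem aux_space (d : ℕ) (ε : ℝ) (hε : 0 < ε) {U Z : Euc d × ℝ → ℝ} (hU : ContDiff ℝ (⊤ : ℕ∞) U)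
    (hZ : ContDiff ℝ 1 Z) {K : Set (Euc d)} (hK : IsCompact K)
    (h : ∀ x t, x ∉ K → Z (x, t) = 0) (t : ℝ) :
    ∫ x, Z (x, t) * fderiv ℝ (auxEn d ε U) (x, t) (0, 1) =
    ∫ x, (-(ε * Z (x, t) * fderiv ℝ U (x, t) (0, 1) * auxH d ε U (x, t))
      - ε * (∑ i : Fin d, fderiv ℝ Z (x, t) (EuclideanSpace.single i 1, 0) *
          fderiv ℝ U (x, t) (EuclideanSpace.single i 1, 0)) * fderiv ℝ U (x, t) (0, 1)) := by
  have h2 : ∀ v, ContDiff ℝ 1 (fun z => fderiv ℝ U z v) := fun v => aux_contDiff_D (n := 1) hU v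
  have hZc := hZ.continuous
  have hUc := hU.continuous
  have hDc : ∀ v, Continuous (fun z => fderiv ℝ U z v) := fun v => (h2 v).continuous
  have hDDc : ∀ v w, Continuous (fun z => fderiv ℝ (fun y => fderiv ℝ U y v) z w) := fun v w =>
    ((h2 v).continuous_fderiv (by simp)).clm_apply continuous_const
  have hDZc : ∀ v, Continuous (fun z => fderiv ℝ Z z v) := fun v =>
    (hZ.continuous_fderiv (by simp)).clm_apply continuous_const
  have hz0 : ∀ x t, x ∉ K → fderiv ℝ Z (x, t) = 0 := aux_fderiv_zero hK h
  have hWc : Continuous (fun z => Wp (U z)) := by unfold Wp; fun_prop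
  -- the integration by parts, one direction at a time
  have hi : ∀ i : Fin d, ∫ x, Z (x, t) * fderiv ℝ U (x, t) (EuclideanSpace.single i 1, 0) *
        fderiv ℝ (fun z => fderiv ℝ U z (0, 1)) (x, t) (EuclideanSpace.single i 1, 0) =
      ∫ x, -((fderiv ℝ Z (x, t) (EuclideanSpace.single i 1, 0) *
          fderiv ℝ U (x, t) (EuclideanSpace.single i 1, 0) + Z (x, t) *
          fderiv ℝ (fun y => fderiv ℝ U y (EuclideanSpace.single i 1, 0)) (x, t)
            (EuclideanSpace.single i 1, 0)) * fderiv ℝ U (x, t) (0, 1)) := by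
    intro i
    have := aux_parts (A := fun z => Z z * fderiv ℝ U z (EuclideanSpace.single i 1, 0))
      (B := fun z => fderiv ℝ U z (0, 1)) (hZ.mul (h2 _)) (h2 _) hK
      (fun x t hx => by simp [h x t hx]) t (EuclideanSpace.single i 1)
    rw [this, integral_neg]
    congr 1
    refine integral_congr_ae (Filter.Eventually.of_forall fun x => ?_)
    simp only
    rw [fderiv_fun_mul (hZ.differentiable (by simp) _) ((h2 _).differentiable (by simp) _)]
    simp only [add_apply, smul_apply, smul_eq_mul]
    ring
  have hI1 : ∀ i : Fin d, Integrable (fun x => Z (x, t) *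
      fderiv ℝ U (x, t) (EuclideanSpace.single i 1, 0) *
        fderiv ℝ (fun z => fderiv ℝ U z (0, 1)) (x, t) (EuclideanSpace.single i 1, 0)) := fun i =>
    aux_int_x (g := fun z => Z z * fderiv ℝ U z (EuclideanSpace.single i 1, 0) *
        fderiv ℝ (fun z => fderiv ℝ U z (0, 1)) z (EuclideanSpace.single i 1, 0))
      ((hZc.mul (hDc _)).mul (hDDc _ _)) hK (fun x t hx => by simp [h x t hx]) t
  have hI2 : ∀ i : Fin d, Integrable (fun x => -((fderiv ℝ Z (x, t) (EuclideanSpace.single i 1, 0) *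
          fderiv ℝ U (x, t) (EuclideanSpace.single i 1, 0) + Z (x, t) *
          fderiv ℝ (fun y => fderiv ℝ U y (EuclideanSpace.single i 1, 0)) (x, t)
            (EuclideanSpace.single i 1, 0)) * fderiv ℝ U (x, t) (0, 1))) := fun i =>
    aux_int_x (g := fun z => -((fderiv ℝ Z z (EuclideanSpace.single i 1, 0) *
          fderiv ℝ U z (EuclideanSpace.single i 1, 0) + Z z *
          fderiv ℝ (fun y => fderiv ℝ U y (EuclideanSpace.single i 1, 0)) z
            (EuclideanSpace.single i 1, 0)) * fderiv ℝ U z (0, 1)))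
      ((((hDZc _).mul (hDc _)).add (hZc.mul (hDDc _ _))).mul (hDc _)).neg hK
      (fun x t hx => by simp [h x t hx, hz0 x t hx]) t
  have hI3 : Integrable (fun x => Z (x, t) * (Wp (U (x, t)) * fderiv ℝ U (x, t) (0, 1) / ε)) :=
    aux_int_x (g := fun z => Z z * (Wp (U z) * fderiv ℝ U z (0, 1) / ε))
      (hZc.mul ((hWc.mul (hDc _)).div_const _)) hK (fun x t hx => by simp [h x t hx]) t
  have e1 : ∫ x, Z (x, t) * fderiv ℝ (auxEn d ε U) (x, t) (0, 1) =
      ε * ∑ i : Fin d, (∫ x, Z (x, t) * fderiv ℝ U (x, t) (EuclideanSpace.single i 1, 0) *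
        fderiv ℝ (fun z => fderiv ℝ U z (0, 1)) (x, t) (EuclideanSpace.single i 1, 0))
      + ∫ x, Z (x, t) * (Wp (U (x, t)) * fderiv ℝ U (x, t) (0, 1) / ε) := by
    rw [← integral_finsetSum _ fun i _ => hI1 i, ← integral_const_mul, ← integral_add
      ((integrable_finsetSum _ fun i _ => hI1 i).const_mul ε) hI3]
    refine integral_congr_ae (Filter.Eventually.of_forall fun x => ?_)
    simp only
    rw [auxEn_dt d ε hU]
    simp_rw [mul_assoc, ← Finset.mul_sum]
    ring
  rw [e1]
  simp_rw [hi]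
  rw [← integral_finsetSum _ fun i _ => hI2 i, ← integral_const_mul, ← integral_add
      ((integrable_finsetSum _ fun i _ => hI2 i).const_mul ε) hI3]
  refine integral_congr_ae (Filter.Eventually.of_forall fun x => ?_)
  simp only [auxH]
  rw [Finset.sum_neg_distrib, ← Finset.sum_mul, Finset.sum_add_distrib, ← Finset.mul_sum]
  field_simp
  ring

/-- integrated Brakke-type identity at the `ε`-level. -/
theorem stmt3 (d : ℕ) (hd : 2 ≤ d) (T ε α : ℝ) (hT : 0 < T) (hε : 0 < ε)
    (hα : α ∈ Set.Ioo (0:ℝ) 1)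
    (φt : Euc d → ℝ → ℝ)
    (hφt : ContDiff ℝ (⊤ : ℕ∞) (Function.uncurry φt))
    (hper : ∀ (x : Euc d) (z : Fin d → ℤ) (t : ℝ),
      φt (x + (WithLp.equiv 2 (Fin d → ℝ)).symm fun i => (z i : ℝ)) t = φt x t)
    (lam : ℝ → ℝ)
    (hlam : ∀ t, lam t = ε ^ (-α) *
      ((∫ x in Qcell d, kfun (φt x 0)) - (∫ x in Qcell d, kfun (φt x t))))
    (hPDE : ∀ (x : Euc d), ∀ t ∈ Set.Ioo (0:ℝ) T,
      ε * deriv (φt x) t =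
        ε * lap (fun y => φt y t) x - Wp (φt x t) / ε + lam t * Real.sqrt (2 * W (φt x t)))
    (ζ : Euc d → ℝ → ℝ)
    (hζ : ContDiff ℝ 1 (Function.uncurry ζ))
    (K : Set (Euc d)) (hK : IsCompact K)
    (hζsupp : ∀ t : ℝ, Function.support (fun x => ζ x t) ⊆ K) :
    ∀ t₁ t₂ : ℝ, 0 ≤ t₁ → t₁ < t₂ → t₂ ≤ T →
      sigma0 * ((∫ x, ζ x t₂ * muDens d ε φt x t₂) - ∫ x, ζ x t₁ * muDens d ε φt x t₁) =
        (∫ t in t₁..t₂, ∫ x,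
          (-(ε * ζ x t * ((heps d ε φt x t) ^ 2 / 2 + (deriv (φt x) t) ^ 2 / 2))
            + ζ x t * (lam t) ^ 2 * W (φt x t) / ε
            - ε * ⟪gradient (fun y => ζ y t) x, gradient (fun y => φt y t) x⟫
                * (heps d ε φt x t + lam t * Real.sqrt (2 * W (φt x t)) / ε)))
          + sigma0 * ∫ t in t₁..t₂, ∫ x, deriv (ζ x) t * muDens d ε φt x t := by
  intro t₁ t₂ h1 h12 h2
  have hσ := aux_sigma_pos
  have hUd : Differentiable ℝ (uncurry φt) := hφt.differentiable (by simp)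
  have hZd : Differentiable ℝ (uncurry ζ) := hζ.differentiable (by simp)
  have hD2 : ∀ v, ContDiff ℝ 1 (fun z => fderiv ℝ (uncurry φt) z v) :=
    fun v => aux_contDiff_D (n := 1) hφt v
  have hEn := auxEn_contDiff d ε hφt
  have hz : ∀ x t, x ∉ K → uncurry ζ (x, t) = 0 := by
    intro x t hx
    by_contra hne
    exact hx (hζsupp t hne)
  have hz0 := aux_fderiv_zero hK hz
  have gU : ∀ x t v, fderiv ℝ (fun y => φt y t) x v = fderiv ℝ (uncurry φt) (x, t) (v, 0) :=
    fun x t v => aux_fderiv_x_apply hUd x t v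
  have gZ : ∀ x t v, fderiv ℝ (fun y => ζ y t) x v = fderiv ℝ (uncurry ζ) (x, t) (v, 0) :=
    fun x t v => aux_fderiv_x_apply hZd x t v
  have tU : ∀ x t, deriv (φt x) t = fderiv ℝ (uncurry φt) (x, t) (0, 1) :=
    fun x t => (aux_deriv_t hUd x t).deriv
  have tZ : ∀ x t, deriv (ζ x) t = fderiv ℝ (uncurry ζ) (x, t) (0, 1) :=
    fun x t => (aux_deriv_t hZd x t).deriv
  have hmu : ∀ x t, sigma0 * muDens d ε φt x t = auxEn d ε (uncurry φt) (x, t) := by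
    intro x t
    unfold muDens auxEn
    rw [← real_inner_self_eq_norm_sq, aux_inner]
    simp_rw [gU, ← sq]
    rw [← mul_assoc, mul_one_div_cancel hσ.ne', one_mul]
    rfl
  have hlap : ∀ x t, lap (fun y => φt y t) x = ∑ i : Fin d, fderiv ℝ (fun y => fderiv ℝ
      (uncurry φt) y (EuclideanSpace.single i 1, 0)) (x, t) (EuclideanSpace.single i 1, 0) := by
    intro x t
    unfold lap
    refine Finset.sum_congr rfl fun i _ => ?_
    simp_rw [gU]
    exact aux_fderiv_x_apply ((hD2 _).differentiable (by simp)) x t _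
  have hh : ∀ x t, heps d ε φt x t = auxH d ε (uncurry φt) (x, t) := by
    intro x t
    unfold heps auxH
    rw [hlap]; rfl
  have hmain := aux_ftc (V := fun z => uncurry ζ z * auxEn d ε (uncurry φt) z) (hζ.mul hEn) hK
    (fun x t hx => by simp [hz x t hx]) t₁ t₂
  have hL : ∀ t, sigma0 * ∫ x, ζ x t * muDens d ε φt x t =
      ∫ x, uncurry ζ (x, t) * auxEn d ε (uncurry φt) (x, t) := by
    intro t
    rw [← integral_const_mul]
    refine integral_congr_ae (Filter.Eventually.of_forall fun x => ?_)
    simp only [← hmu, uncurry_apply_pair]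
    ring
  have hB : ∀ t, sigma0 * ∫ x, deriv (ζ x) t * muDens d ε φt x t =
      ∫ x, fderiv ℝ (uncurry ζ) (x, t) (0, 1) * auxEn d ε (uncurry φt) (x, t) := by
    intro t
    rw [← integral_const_mul]
    refine integral_congr_ae (Filter.Eventually.of_forall fun x => ?_)
    simp only [← hmu, tZ]
    ring
  have hc1 : Continuous (fun z => fderiv ℝ (uncurry ζ) z (0, 1) * auxEn d ε (uncurry φt) z) :=
    ((hζ.continuous_fderiv (by simp)).clm_apply continuous_const).mul hEn.continuous
  have hc2 : Continuous (fun z => uncurry ζ z * fderiv ℝ (auxEn d ε (uncurry φt)) z (0, 1)) :=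
    hζ.continuous.mul ((hEn.continuous_fderiv (by simp)).clm_apply continuous_const)
  have hv1 : ∀ x t, x ∉ K →
      fderiv ℝ (uncurry ζ) (x, t) (0, 1) * auxEn d ε (uncurry φt) (x, t) = 0 :=
    fun x t hx => by simp [hz0 x t hx]
  have hv2 : ∀ x t, x ∉ K →
      uncurry ζ (x, t) * fderiv ℝ (auxEn d ε (uncurry φt)) (x, t) (0, 1) = 0 :=
    fun x t hx => by rw [hz x t hx, zero_mul]
  have hsplit : ∀ t, ∫ x, fderiv ℝ (fun z => uncurry ζ z * auxEn d ε (uncurry φt) z) (x, t) (0, 1) =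
      (∫ x, uncurry ζ (x, t) * fderiv ℝ (auxEn d ε (uncurry φt)) (x, t) (0, 1)) +
      ∫ x, fderiv ℝ (uncurry ζ) (x, t) (0, 1) * auxEn d ε (uncurry φt) (x, t) := by
    intro t
    rw [← integral_add (aux_int_x hc2 hK hv2 t) (aux_int_x hc1 hK hv1 t)]
    refine integral_congr_ae (Filter.Eventually.of_forall fun x => ?_)
    simp only
    rw [fderiv_fun_mul (hZd _) (hEn.differentiable (by simp) _)]
    simp only [add_apply, smul_apply, smul_eq_mul]
    ring
  rw [mul_sub, hL, hL, hmain, ← intervalIntegral.integral_const_mul]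
  simp_rw [hB, hsplit]
  rw [intervalIntegral.integral_add (aux_intervalIntegrable hc2 hK hv2 _ _)
    (aux_intervalIntegrable hc1 hK hv1 _ _)]
  congr 1
  rw [intervalIntegral.integral_of_le h12.le, intervalIntegral.integral_of_le h12.le,
    integral_Ioc_eq_integral_Ioo, integral_Ioc_eq_integral_Ioo]
  refine setIntegral_congr_fun measurableSet_Ioo fun t ht => ?_
  have htT : t ∈ Set.Ioo 0 T := ⟨h1.trans_lt ht.1, ht.2.trans_le h2⟩
  rw [aux_space d ε hε hφt hζ hK hz t]
  refine integral_congr_ae (Filter.Eventually.of_forall fun x => ?_)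
  simp only
  have hp := hPDE x t htT
  have hW : 0 ≤ 2 * W (φt x t) := by unfold W; positivity
  have hsq := Real.sq_sqrt hW
  have hq : deriv (φt x) t = heps d ε φt x t + lam t * Real.sqrt (2 * W (φt x t)) / ε := by
    unfold heps
    field_simp
    field_simp at hp
    linarith
  rw [← hq, aux_inner]
  simp_rw [gU, gZ, ← tU, ← hh, uncurry_apply_pair]
  have hW2 : lam t ^ 2 * W (φt x t) / ε = ε * (deriv (φt x) t - heps d ε φt x t) ^ 2 / 2 := by
    have : deriv (φt x) t - heps d ε φt x t = lam t * Real.sqrt (2 * W (φt x t)) / ε := by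
      rw [hq]; ring
    rw [this, div_pow, mul_pow, hsq]
    field_simp
  have : ζ x t * lam t ^ 2 * W (φt x t) / ε = ζ x t * (lam t ^ 2 * W (φt x t) / ε) := by ring
  rw [this, hW2]
  ring
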